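/- Let 0 ≤ i ≤ k ≤ n and let v ∈ R^{C([n],i)} satisfy P↓_{n,i} v = 0. Then P∧_{n,k} (P↑_{n,i,k} v) = (n − k − i)(k − i + 1) · P↑_{n,i,k} v. -/

import Mathlib

/-!
The proof is the usual raising-operator argument. The key fact is the commutation relation
`P↓_{n,k+1} P↑_{n,k} - P↑_{n,k-1} P↓_{n,k} = (n - 2k) I` (`down_up_comm`, and `down_up_zero` for
`k = 0`). Put `w_d = P↑_{n,i,i+d} v` and let `c_d` be the claimed eigenvalue at level `k = i + d`.
If `P↓ P↑ w_d = c_d w_d`, then, as `w_{d+1} = P↑ w_d`, the commutation relation gives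
`P↓ P↑ w_{d+1} = P↑ (P↓ P↑ w_d) + (n - 2(k+1)) w_{d+1} = (c_d + n - 2(k+1)) w_{d+1}`, and
`c_{d+1} = c_d + n - 2(k+1)`. At `d = 0` the hypothesis `P↓ v = 0` gives `c_0 = n - 2i`.

The commutation relation is checked on functions of subsets of `[n]`: there the up operator becomes
`g ↦ (s ↦ ∑_{a ∈ s} g (s \ {a}))` and the down operator `g ↦ (s ↦ ∑_{a ∉ s} g (s ∪ {a}))`
(`up_res`, `down_res`), and in both compositions the terms that exchange two distinct elements
coincide, so only the diagonal contributions `n - |s|` and `|s|` differ.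
-/

open scoped Classical

/-- The slice `C([n],k)`: vectors in `{0,1}^n` with exactly `k` ones. -/
abbrev Slice (n k : ℕ) :=
  {x : Fin n → Bool // (Finset.univ.filter fun i => x i = true).card = k}

/-- The up operator `P↑_{n,k}`. -/
noncomputable def upOp (n k : ℕ) : Matrix (Slice n (k + 1)) (Slice n k) ℝ :=
  Matrix.of fun x y => if ∀ i, y.1 i = true → x.1 i = true then (1 : ℝ) else 0

/-- The down operator `P↓_{n,k}` (the transpose of `P↑_{n,k-1}`); it is the zero
matrix for `k = 0`. -/
noncomputable def downOp (n k : ℕ) : Matrix (Slice n (k - 1)) (Slice n k) ℝ :=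
  Matrix.of fun x y => if 0 < k ∧ ∀ i, x.1 i = true → y.1 i = true then (1 : ℝ) else 0

noncomputable def upPathAux (n i : ℕ) : (d : ℕ) → Matrix (Slice n (i + d)) (Slice n i) ℝ
  | 0 => show Matrix (Slice n (i + 0)) (Slice n i) ℝ from (1 : Matrix (Slice n i) (Slice n i) ℝ)
  | d + 1 => upOp n (i + d) * upPathAux n i d

/-- The iterated up operator `P↑_{n,i,k} = P↑_{n,k-1} ⋯ P↑_{n,i}`. -/
noncomputable def upPath (n i k : ℕ) : Matrix (Slice n k) (Slice n i) ℝ :=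
  if h : i ≤ k then
    cast (by rw [Nat.add_sub_cancel' h]) (upPathAux n i (k - i))
  else 0

/-- `P∨_{n,k} = P↑_{n,k-1} P↓_{n,k}`. -/
noncomputable def upDown (n k : ℕ) : Matrix (Slice n k) (Slice n k) ℝ :=
  if h : 1 ≤ k then
    cast (by rw [Nat.sub_add_cancel h]) (upOp n (k - 1) * downOp n k)
  else 0

/-- `P∧_{n,k} = P↓_{n,k+1} P↑_{n,k}`. -/
noncomputable def downUp (n k : ℕ) : Matrix (Slice n k) (Slice n k) ℝ :=
  downOp n (k + 1) * upOp n k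

/-- `S ∈ H_{n,k}`: `S ⊆ {1,…,n}`, `|S| ≤ k`, and the `j`-th smallest element
(1-indexed) is at least `2j`. -/
def IsH (n k : ℕ) (S : Finset ℕ) : Prop :=
  S ⊆ Finset.Icc 1 n ∧ S.card ≤ k ∧
    ∀ j, j < S.card → 2 * (j + 1) ≤ (S.sort (· ≤ ·)).getD j 0

lemma wcast_false {n : ℕ} (x : Fin (n + 1) → Bool) (h : ¬ x (Fin.last n) = true) :
    (Finset.univ.filter fun i : Fin n => x (Fin.castSucc i) = true).card
      = (Finset.univ.filter fun i : Fin (n + 1) => x i = true).card := by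
  rw [Finset.card_filter, Finset.card_filter, Fin.sum_univ_castSucc]
  simp [h]

lemma wcast_true {n : ℕ} (x : Fin (n + 1) → Bool) (h : x (Fin.last n) = true) :
    (Finset.univ.filter fun i : Fin n => x (Fin.castSucc i) = true).card + 1
      = (Finset.univ.filter fun i : Fin (n + 1) => x i = true).card := by
  rw [Finset.card_filter, Finset.card_filter, Fin.sum_univ_castSucc]
  simp [h]

/-- Forgetting the last coordinate of `x` when it equals `0`. -/
def dropLast {n m : ℕ} (x : Slice (n + 1) m) (h : ¬ x.1 (Fin.last n) = true) : Slice n m :=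
  ⟨fun i => x.1 (Fin.castSucc i), by
    show (Finset.univ.filter fun i : Fin n => x.1 (Fin.castSucc i) = true).card = m
    rw [wcast_false x.1 h]; exact x.2⟩

/-- Forgetting the last coordinate of `x` when it equals `1`. -/
def dropLastT {n m : ℕ} (x : Slice (n + 1) m) (h : x.1 (Fin.last n) = true) : Slice n (m - 1) :=
  ⟨fun i => x.1 (Fin.castSucc i), by
    show (Finset.univ.filter fun i : Fin n => x.1 (Fin.castSucc i) = true).card = m - 1
    have h1 := wcast_true x.1 h
    have h2 := x.2
    omega⟩

/-- The vector `χ_{n,S}` on the slice `C([n],|S|)`, defined recursively. -/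
noncomputable def chi : (n : ℕ) → (S : Finset ℕ) → Slice n S.card → ℝ
  | 0, _ => fun _ => 1
  | n + 1, S =>
    if hS : n + 1 ∈ S then
      fun x =>
        if hx : x.1 (Fin.last n) = true then
          chi n (S.erase (n + 1)) ⟨(dropLastT x hx).1, by
            show (Finset.univ.filter fun i : Fin n => x.1 (Fin.castSucc i) = true).card
              = (S.erase (n + 1)).card
            rw [Finset.card_erase_of_mem hS]
            exact (dropLastT x hx).2⟩
        else
          -(∑ y : Slice n (S.erase (n + 1)).card,
              (if ∀ i, y.1 i = true → (dropLast x hx).1 i = true then (1 : ℝ) else 0) *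
                chi n (S.erase (n + 1)) y) / ((n : ℝ) + 1 - 2 * S.card + 1)
    else
      fun x =>
        if hx : x.1 (Fin.last n) = true then 0
        else chi n S (dropLast x hx)

/-- The basis vector `P↑_{n,|S|,k} χ_{n,S}` of `R^{C([n],k)}`. -/
noncomputable def basisVec (n k : ℕ) (S : Finset ℕ) : Slice n k → ℝ :=
  (upPath n S.card k).mulVec (chi n S)

/-- The Fourier coefficient `f̂(S)`, equal to `0` when `S ∉ H_{n,min{k,n-k}}`. -/
noncomputable def fourierSlice (n k : ℕ) (f : Slice n k → ℝ) (S : Finset ℕ) : ℝ :=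
  if IsH n (min k (n - k)) S then
    (∑ x, f x * basisVec n k S x) / Real.sqrt (∑ x, basisVec n k S x ^ 2)
  else 0

/-- The Hamming weight of `z ∈ {0,1}^t`. -/
def wt {t : ℕ} (z : Fin t → Bool) : ℕ :=
  (Finset.univ.filter fun i => z i = true).card

/-- The concatenation `x ∘ z ∈ {0,1}^n` of `x ∈ {0,1}^{n-t}` with `z ∈ {0,1}^t`
(with `z` occupying the last `t` coordinates). -/
def catFun (n t : ℕ) (x : Fin (n - t) → Bool) (z : Fin t → Bool) : Fin n → Bool :=
  fun i =>
    if h : (i : ℕ) < n - t then x ⟨i, h⟩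
    else if h2 : (i : ℕ) - (n - t) < t then z ⟨(i : ℕ) - (n - t), h2⟩
    else false

/-- The restriction `f_z : C([n-t], k-|z|) → ℝ`, `f_z(x) = f(x ∘ z)`; it is
(the everywhere-zero function on) the empty function when `|z| > k`. -/
noncomputable def restrict (n k t : ℕ) (f : Slice n k → ℝ) (z : Fin t → Bool) :
    Slice (n - t) (k - wt z) → ℝ :=
  fun x =>
    if h : (Finset.univ.filter fun i => catFun n t x.1 z i = true).card = k then
      f ⟨catFun n t x.1 z, h⟩
    else 0

/-- The Fourier coefficient `f̂_z(S)` of the restriction `f_z`. -/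
noncomputable def fourierSliceRestrict (n k t : ℕ) (f : Slice n k → ℝ) (z : Fin t → Bool)
    (S : Finset ℕ) : ℝ :=
  fourierSlice (n - t) (k - wt z) (restrict n k t f z) S

/-- The adjacency matrix `A_{n,k}` of the Johnson graph. -/
noncomputable def johnsonAdj (n k : ℕ) : Matrix (Slice n k) (Slice n k) ℝ :=
  Matrix.of fun x y =>
    if (Finset.univ.filter fun i => x.1 i ≠ y.1 i).card = 2 then (1 : ℝ) else 0

/-! ### Functions on slices as functions of subsets -/

/-- The subset of `[n]` whose indicator vector is `x`. -/
def supp {n : ℕ} (x : Fin n → Bool) : Finset (Fin n) := Finset.univ.filter fun i => x i = true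

lemma mem_supp {n : ℕ} (x : Fin n → Bool) (i : Fin n) : i ∈ supp x ↔ x i = true := by
  simp [supp]

lemma card_supp {n k : ℕ} (x : Slice n k) : (supp x.1).card = k := x.2

/-- The restriction to the slice `C([n],k)` of a function on subsets of `[n]`. -/
def res {n : ℕ} (k : ℕ) (g : Finset (Fin n) → ℝ) : Slice n k → ℝ := fun x => g (supp x.1)

/-- The up operator on functions of subsets of `[n]` of all sizes at once. -/
def gUp {n : ℕ} (g : Finset (Fin n) → ℝ) : Finset (Fin n) → ℝ :=
  fun s => ∑ a ∈ s, g (s.erase a)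

/-- The down operator on functions of subsets of `[n]` of all sizes at once. -/
def gDown {n : ℕ} (g : Finset (Fin n) → ℝ) : Finset (Fin n) → ℝ :=
  fun s => ∑ a ∈ sᶜ, g (insert a s)

lemma supp_decide {n : ℕ} (s : Finset (Fin n)) : supp (fun i => decide (i ∈ s)) = s := by
  ext i; simp [supp]

lemma decide_supp {n : ℕ} (x : Fin n → Bool) : (fun i => decide (i ∈ supp x)) = x := by
  funext i; simp [supp]

/-- Every function on a slice extends to all subsets (by zero off the slice), so identities between
slice operators can be checked on functions of the form `res k g`. -/
lemma exists_res {n k : ℕ} (f : Slice n k → ℝ) : ∃ g, f = res k g := by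
  refine ⟨fun s => if h : (supp (fun i => decide (i ∈ s))).card = k then
    f ⟨fun i => decide (i ∈ s), h⟩ else 0, ?_⟩
  funext x
  have h : (supp (fun i => decide (i ∈ supp x.1))).card = k := by
    rw [supp_decide]; exact x.2
  simp only [res]
  rw [dif_pos h]
  congr 1
  exact Subtype.ext (decide_supp x.1).symm

/-- Sums over a slice are sums over the subsets of size `k`. -/
lemma sum_slice {n k : ℕ} (h : Finset (Fin n) → ℝ) :
    ∑ y : Slice n k, h (supp y.1) = ∑ s ∈ Finset.univ.filter (fun s => s.card = k), h s := by
  refine Finset.sum_bij (fun y _ => supp y.1) ?_ ?_ ?_ ?_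
  · intro y _
    simpa using card_supp y
  · intro y _ z _ hyz
    apply Subtype.ext
    rw [← decide_supp y.1, ← decide_supp z.1, hyz]
  · intro s hs
    refine ⟨⟨fun i => decide (i ∈ s), ?_⟩, Finset.mem_univ _, supp_decide s⟩
    have : (supp (fun i => decide (i ∈ s))).card = k := by
      rw [supp_decide]; simpa using hs
    exact this
  · intro _ _; rfl

/-- The subsets of size `k` contained in a set `s` of size `k + 1` are the sets `s.erase a`, `a ∈ s`,
so `gUp` restricts to the up operator on each slice. -/
lemma up_res {n k : ℕ} (g : Finset (Fin n) → ℝ) :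
    (upOp n k).mulVec (res k g) = res (k + 1) (gUp g) := by
  funext x
  have h1 : (upOp n k).mulVec (res k g) x =
      ∑ y : Slice n k, (fun s => if s ⊆ supp x.1 then g s else 0) (supp y.1) := by
    simp only [Matrix.mulVec, dotProduct, upOp, Matrix.of_apply, res, ite_mul, one_mul, zero_mul,
      Finset.subset_iff, mem_supp]
  have hinj : Set.InjOn (fun a => (supp x.1).erase a) (supp x.1 : Set (Fin n)) :=
    Finset.erase_injOn _
  rw [h1, sum_slice (fun s => if s ⊆ supp x.1 then g s else 0), ← Finset.sum_filter,
    Finset.filter_filter, res, gUp, ← Finset.sum_image hinj (f := g)]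
  refine Finset.sum_congr ?_ fun _ _ => rfl
  ext s
  have hc := card_supp x
  simp only [Finset.mem_filter, Finset.mem_univ, true_and, Finset.mem_image]
  constructor
  · rintro ⟨hs, hsx⟩
    obtain ⟨a, ha, hax⟩ := Finset.exists_eq_insert_iff.2 ⟨hsx, by omega⟩
    exact ⟨a, by simp [← hax], by simp [← hax, ha]⟩
  · rintro ⟨a, ha, rfl⟩
    exact ⟨by rw [Finset.card_erase_of_mem ha]; omega, Finset.erase_subset _ _⟩

/-- The sets of size `k + 1` containing a set `s` of size `k` are the sets `insert a s`, `a ∉ s`,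
so `gDown` restricts to the down operator on each slice. -/
lemma down_res {n k : ℕ} (g : Finset (Fin n) → ℝ) :
    (downOp n (k + 1)).mulVec (res (k + 1) g) = res k (gDown g) := by
  funext x
  have h1 : (downOp n (k + 1)).mulVec (res (k + 1) g) x =
      ∑ y : Slice n (k + 1), (fun s => if supp x.1 ⊆ s then g s else 0) (supp y.1) := by
    simp only [Matrix.mulVec, dotProduct, downOp, Matrix.of_apply, res, ite_mul, one_mul, zero_mul,
      Finset.subset_iff, mem_supp, Nat.succ_pos, true_and]
  have hinj : Set.InjOn (fun a => insert a (supp x.1)) ((supp x.1)ᶜ : Finset (Fin n)) := by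
    intro a ha b _ hab
    have ha' : a ∉ supp x.1 := by simpa using ha
    exact (Finset.insert_inj ha').1 hab
  rw [h1, sum_slice (fun s => if supp x.1 ⊆ s then g s else 0), ← Finset.sum_filter,
    Finset.filter_filter, res, gDown, ← Finset.sum_image hinj (f := g)]
  refine Finset.sum_congr ?_ fun _ _ => rfl
  ext s
  have hc : (supp x.1).card = k := card_supp x
  simp only [Finset.mem_filter, Finset.mem_univ, true_and, Finset.mem_image, Finset.mem_compl]
  constructor
  · rintro ⟨hs, hsx⟩
    obtain ⟨a, ha, hax⟩ := Finset.exists_eq_insert_iff.2 ⟨hsx, by omega⟩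
    exact ⟨a, ha, hax⟩
  · rintro ⟨a, ha, rfl⟩
    exact ⟨by rw [Finset.card_insert_of_notMem ha, hc], Finset.subset_insert _ _⟩

/-! ### The commutation relation -/

/-- The commutation relation on functions of subsets. The terms `g (s ∪ {a} \ {b})` with `a ∉ s` and
`b ∈ s` occur in both compositions and cancel. -/
lemma gDown_gUp {n : ℕ} (g : Finset (Fin n) → ℝ) (s : Finset (Fin n)) :
    gDown (gUp g) s = gUp (gDown g) s + ((n : ℝ) - 2 * s.card) * g s := by
  have h1 : gDown (gUp g) s
      = ∑ a ∈ sᶜ, (g s + ∑ b ∈ s, g ((insert a s).erase b)) := by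
    refine Finset.sum_congr rfl fun a ha => ?_
    have ha' : a ∉ s := by simpa using ha
    rw [gUp, Finset.sum_insert ha', Finset.erase_insert ha']
  have h2 : gUp (gDown g) s
      = ∑ b ∈ s, (g s + ∑ a ∈ sᶜ, g ((insert a s).erase b)) := by
    refine Finset.sum_congr rfl fun b hb => ?_
    rw [gDown, Finset.compl_erase, Finset.sum_insert (by simpa using hb), Finset.insert_erase hb]
    congr 1
    refine Finset.sum_congr rfl fun a ha => ?_
    have hab : a ≠ b := by
      rintro rfl
      simp [hb] at ha
    rw [Finset.erase_insert_of_ne hab]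
  have hc : ((sᶜ.card : ℕ) : ℝ) = (n : ℝ) - s.card := by
    rw [Finset.card_compl, Fintype.card_fin, Nat.cast_sub]
    simpa using Finset.card_le_univ s
  rw [h1, h2, Finset.sum_add_distrib, Finset.sum_add_distrib, Finset.sum_const, Finset.sum_const,
    Finset.sum_comm (s := s), nsmul_eq_mul, nsmul_eq_mul, hc]
  ring

/-- The commutation relation between the up and down operators on a slice of positive level. -/
lemma down_up_comm {n k : ℕ} (f : Slice n (k + 1) → ℝ) :
    (downOp n (k + 1 + 1)).mulVec ((upOp n (k + 1)).mulVec f)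
      = (upOp n k).mulVec ((downOp n (k + 1)).mulVec f)
        + ((n : ℝ) - 2 * ((k : ℝ) + 1)) • f := by
  obtain ⟨g, rfl⟩ := exists_res f
  have hD : (downOp n (k + 1)).mulVec (res (k + 1) g) = res k (gDown g) := down_res g
  have hU : (upOp n k).mulVec ((downOp n (k + 1)).mulVec (res (k + 1) g))
      = res (k + 1) (gUp (gDown g)) := (congrArg _ hD).trans (up_res _)
  have hDU : (downOp n (k + 1 + 1)).mulVec ((upOp n (k + 1)).mulVec (res (k + 1) g))
      = res (k + 1) (gDown (gUp g)) := (congrArg _ (up_res g)).trans (down_res _)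
  rw [hDU, hU]
  funext x
  have hx := card_supp x
  simp only [res, Pi.add_apply, Pi.smul_apply, smul_eq_mul]
  rw [gDown_gUp, hx]
  push_cast
  ring

/-- The commutation relation at level `0`, where the term `P↑ P↓` is absent. -/
lemma down_up_zero {n : ℕ} (f : Slice n 0 → ℝ) :
    (downOp n (0 + 1)).mulVec ((upOp n 0).mulVec f) = (n : ℝ) • f := by
  obtain ⟨g, rfl⟩ := exists_res f
  have hDU : (downOp n (0 + 1)).mulVec ((upOp n 0).mulVec (res 0 g))
      = res 0 (gDown (gUp g)) := (congrArg _ (up_res g)).trans (down_res _)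
  rw [hDU]
  funext x
  have hx : supp x.1 = ∅ := Finset.card_eq_zero.1 (card_supp x)
  simp only [res, Pi.smul_apply, smul_eq_mul]
  rw [gDown_gUp, hx]
  simp [gUp]

/-! ### The eigenvalue equation -/

lemma upPath_add (n i d : ℕ) : upPath n i (i + d) = upPathAux n i d := by
  -- The cast in `upPath` disappears once `i + d - i` is replaced by a variable equal to `d`.
  have key : ∀ e, e = d → ∀ h : Matrix (Slice n (i + e)) (Slice n i) ℝ
      = Matrix (Slice n (i + d)) (Slice n i) ℝ,
      cast h (upPathAux n i e) = upPathAux n i d := by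
    rintro e rfl h
    rfl
  rw [upPath, dif_pos (Nat.le_add_right i d)]
  exact key _ (Nat.add_sub_cancel_left i d) _

/-- The eigenvalue equation at level `k = i + d`, by induction on `d`: each step adds
`n - 2(k + 1)` to the eigenvalue. -/
lemma upPathAux_eigen (n i : ℕ) (v : Slice n i → ℝ) (hv : (downOp n i).mulVec v = 0) (d : ℕ) :
    (downOp n (i + d + 1)).mulVec ((upOp n (i + d)).mulVec ((upPathAux n i d).mulVec v))
      = (((n : ℝ) - (i + d : ℕ) - i) * (((i + d : ℕ) : ℝ) - i + 1)) •
        (upPathAux n i d).mulVec v := by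
  induction d with
  | zero =>
    have h0 : (upPathAux n i 0).mulVec v = v := Matrix.one_mulVec v
    rw [h0]
    cases i with
    | zero =>
      refine (down_up_zero v).trans ?_
      simp
    | succ j =>
      have h := down_up_comm v
      have hz : (upOp n j).mulVec ((downOp n (j + 1)).mulVec v) = 0 :=
        (congrArg _ hv).trans (Matrix.mulVec_zero _)
      rw [hz, zero_add] at h
      refine h.trans ?_
      congr 1
      push_cast
      ring
  | succ d ih =>
    have hs : (upPathAux n i (d + 1)).mulVec v
        = (upOp n (i + d)).mulVec ((upPathAux n i d).mulVec v) :=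
      (Matrix.mulVec_mulVec _ _ _).symm
    rw [hs]
    refine (down_up_comm (k := i + d) _).trans ?_
    have hU : (upOp n (i + d)).mulVec ((downOp n (i + d + 1)).mulVec
          ((upOp n (i + d)).mulVec ((upPathAux n i d).mulVec v)))
        = (((n : ℝ) - (i + d : ℕ) - i) * (((i + d : ℕ) : ℝ) - i + 1)) •
          (upOp n (i + d)).mulVec ((upPathAux n i d).mulVec v) :=
      (congrArg _ ih).trans (Matrix.mulVec_smul _ _ _)
    refine (congrArg (· + _) hU).trans ?_
    refine (add_smul _ _ _).symm.trans ?_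
    congr 1
    push_cast
    ring

/-- If `P↓_{n,i} v = 0` then `P↑_{n,i,k} v` is an eigenvector of `P∧_{n,k}` with
eigenvalue `(n - k - i)(k - i + 1)`. -/
theorem stmt2 (n i k : ℕ) (hik : i ≤ k) (hkn : k ≤ n) (v : Slice n i → ℝ)
    (hv : (downOp n i).mulVec v = 0) :
    (downUp n k).mulVec ((upPath n i k).mulVec v)
      = ((((n : ℝ) - k - i) * ((k : ℝ) - i + 1)) • (upPath n i k).mulVec v) := by
  obtain ⟨d, rfl⟩ := Nat.exists_eq_add_of_le hik
  rw [upPath_add]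
  exact (Matrix.mulVec_mulVec _ _ _).symm.trans (upPathAux_eigen n i v hv d)
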